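/- The point H̃ = T_P⁻¹(H) is the midpoint of the segment joining P′ and K⁻¹(H), and H̃ is the reflection of Q through O (that is, O is the midpoint of segment QH̃). -/

import Mathlib

noncomputable section

/-- The real affine plane. -/
abbrev Pt : Type := ℝ × ℝ

/-- `u` and `v` are parallel vectors (the zero vector is parallel to everything). -/
def Par (u v : Pt) : Prop := ∃ t : ℝ, u = t • v ∨ v = t • u

/-- The centroid of the triangle `ABC`. -/
def cent (A B C : Pt) : Pt := (3⁻¹ : ℝ) • (A + B + C)

/-- The homothety with center `Z` and ratio `r`. -/
def homoth (Z : Pt) (r : ℝ) (X : Pt) : Pt := Z + r • (X - Z)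

/-- The value at `p` of the quadratic polynomial with coefficient vector `c`. -/
def qval (c : Fin 6 → ℝ) (p : Pt) : ℝ :=
  c 0 * p.1 ^ 2 + c 1 * p.1 * p.2 + c 2 * p.2 ^ 2 + c 3 * p.1 + c 4 * p.2 + c 5

/-- `S` is a conic: the zero locus of a real polynomial of total degree 2. -/
def IsConic (S : Set Pt) : Prop :=
  ∃ c : Fin 6 → ℝ, ¬(c 0 = 0 ∧ c 1 = 0 ∧ c 2 = 0) ∧ S = {p | qval c p = 0}

/-- `Z` is a center of symmetry of `S`. -/
def IsCenterOf (Z : Pt) (S : Set Pt) : Prop :=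
  ∀ p ∈ S, (2 : ℝ) • Z - p ∈ S

/-- The gradient at `p` of the quadratic polynomial with coefficients `c`. -/
def qgrad (c : Fin 6 → ℝ) (p : Pt) : Pt :=
  (2 * c 0 * p.1 + c 1 * p.2 + c 3, c 1 * p.1 + 2 * c 2 * p.2 + c 4)

/-- The line through `X` and `Y`. -/
def lineThru (X Y : Pt) : Set Pt := {p | ∃ t : ℝ, p = X + t • (Y - X)}

/-- `L` is the tangent line at the nonsingular point `p` of the conic with coefficients `c`. -/
def IsTangentLineAt (c : Fin 6 → ℝ) (L : Set Pt) (p : Pt) : Prop :=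
  qval c p = 0 ∧ qgrad c p ≠ 0 ∧
  L = {q | (qgrad c p).1 * (q.1 - p.1) + (qgrad c p).2 * (q.2 - p.2) = 0}

/-!
Write `T` for `T_P` and `X = T⁻¹ H`. Inscribing the image triangle `DEF` in `ABC` forces the linear
part `L` of `T` to have trace `-1`, so that in dimension two `det (1 + L) = det L`. Moreover `T`
fixes `Q`, and `Q` lies on the line joining the midpoints of `AD` and `BC`. With the origin at `Q`
these facts turn `AH ∥ QD` into `(X + L X) ∧ (A + L A) = (A + B + C) ∧ (A + L A)`. Together with the
same relation at `B` this yields `X + H + Q = A + B + C`, and both claims follow from it since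
`H + 2 O = A + B + C`.
-/

section Wedge

variable {R : Type*} [CommRing R]

/-- The wedge product (signed area) of two vectors of the coordinate plane, as a bilinear map; it
vanishes exactly on parallel vectors. -/
def wedge : R × R →ₗ[R] R × R →ₗ[R] R :=
  LinearMap.mk₂ R (fun u v ↦ u.1 * v.2 - u.2 * v.1)
    (fun _ _ _ ↦ by simp only [Prod.fst_add, Prod.snd_add]; ring)
    (fun _ _ _ ↦ by simp only [Prod.smul_fst, Prod.smul_snd, smul_eq_mul]; ring)
    (fun _ _ _ ↦ by simp only [Prod.fst_add, Prod.snd_add]; ring)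
    (fun _ _ _ ↦ by simp only [Prod.smul_fst, Prod.smul_snd, smul_eq_mul]; ring)

theorem wedge_apply (u v : R × R) : wedge u v = u.1 * v.2 - u.2 * v.1 := rfl

theorem wedge_self (u : R × R) : wedge u u = 0 := by
  rw [wedge_apply]; ring

theorem neg_wedge (u v : R × R) : -wedge u v = wedge v u := by
  simp only [wedge_apply]; ring

theorem eq_of_wedge_eq_wedge [IsDomain R] {u v w w' : R × R} (huv : wedge u v ≠ 0)
    (hu : wedge w u = wedge w' u) (hv : wedge w v = wedge w' v) : w = w' := by
  simp only [wedge_apply] at huv hu hv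
  ext <;> apply mul_left_cancel₀ huv
  · linear_combination u.1 * hv - v.1 * hu
  · linear_combination u.2 * hv - v.2 * hu

theorem linearMap_apply_eq_smul_add_smul (f : R × R →ₗ[R] R × R) (u : R × R) :
    f u = u.1 • f (1, 0) + u.2 • f (0, 1) := by
  rw [← map_smul, ← map_smul, ← map_add]
  simp

theorem wedge_map_map (f : R × R →ₗ[R] R × R) (u v : R × R) :
    wedge (f u) (f v) = LinearMap.det f * wedge u v := by
  rw [← LinearMap.det_toMatrix (Module.Basis.finTwoProd R), Matrix.det_fin_two,
    linearMap_apply_eq_smul_add_smul f u, linearMap_apply_eq_smul_add_smul f v]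
  simp only [wedge_apply, LinearMap.toMatrix_apply, Module.Basis.finTwoProd_zero,
    Module.Basis.finTwoProd_one, Module.Basis.coe_finTwoProd_repr, Matrix.cons_val_zero,
    Matrix.cons_val_one, Prod.fst_add, Prod.snd_add, Prod.smul_fst, Prod.smul_snd, smul_eq_mul]
  ring

theorem wedge_map_add_wedge_map (f : R × R →ₗ[R] R × R) (u v : R × R) :
    wedge (f u) v + wedge u (f v) = LinearMap.trace R (R × R) f * wedge u v := by
  rw [LinearMap.trace_eq_matrix_trace R (Module.Basis.finTwoProd R), Matrix.trace_fin_two,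
    linearMap_apply_eq_smul_add_smul f u, linearMap_apply_eq_smul_add_smul f v]
  simp only [wedge_apply, LinearMap.toMatrix_apply, Module.Basis.finTwoProd_zero,
    Module.Basis.finTwoProd_one, Module.Basis.coe_finTwoProd_repr, Matrix.cons_val_zero,
    Matrix.cons_val_one, Prod.fst_add, Prod.snd_add, Prod.smul_fst, Prod.smul_snd, smul_eq_mul]
  ring

theorem wedge_add_map_add_map_of_trace_eq_neg_one {f : R × R →ₗ[R] R × R}
    (hf : LinearMap.trace R (R × R) f = -1) (u v : R × R) :
    wedge (u + f u) (v + f v) = wedge (f u) (f v) := by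
  have htrace := wedge_map_add_wedge_map f u v
  rw [hf] at htrace
  rw [LinearMap.map_add₂, map_add, map_add]
  linear_combination htrace

theorem wedge_add_map_eq_of_trace_eq_neg_one {f : R × R →ₗ[R] R × R}
    (hf : LinearMap.trace R (R × R) f = -1) {a t w : R × R}
    (ht : wedge (a + f a) t = 0) (hw : wedge (f w - a) (f a) = 0) :
    wedge (w + f w) (a + f a) = wedge (a + t) (a + f a) := calc
  wedge (w + f w) (a + f a) = wedge (f w) (f a) :=
    wedge_add_map_add_map_of_trace_eq_neg_one hf w a
  _ = wedge a (f a) := by rwa [LinearMap.map_sub₂, sub_eq_zero] at hw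
  _ = wedge a (a + f a) := by rw [map_add, wedge_self, zero_add]
  _ = wedge (a + t) (a + f a) := by
    rw [LinearMap.map_add₂, ← neg_wedge _ t, ht, neg_zero, add_zero]

end Wedge

section Isotomcomplement

variable {K V : Type*} [Field K] [AddCommGroup V] [Module K V]

/-- The isotomcomplement `Q`, with respect to the triangle `ABC`, of the point with homogeneous
barycentric coordinates `(x : y : z)`: the complement of the isotomic conjugate
`(yz : zx : xy)`, which has barycentric coordinates `(x(y+z) : y(x+z) : z(x+y))`. It is meaningful
only if `2(xy + yz + zx) ≠ 0`. -/
def isotomcomplement (A B C : V) (x y z : K) : V :=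
  (2 * (x * y + y * z + z * x))⁻¹ •
    ((x * (y + z)) • A + (y * (x + z)) • B + (z * (x + y)) • C)

theorem isotomcomplement_swap (A B C : V) (x y z : K) :
    isotomcomplement B A C y x z = isotomcomplement A B C x y z := by
  have hweight : y * x + x * z + z * y = x * y + y * z + z * x := by ring
  rw [isotomcomplement, isotomcomplement, hweight]
  module

theorem smul_isotomcomplement (A B C : V) {x y z : K} (h : 2 * (x * y + y * z + z * x) ≠ 0) :
    (2 * (x * y + y * z + z * x)) • isotomcomplement A B C x y z =
      (x * (y + z)) • A + (y * (x + z)) • B + (z * (x + y)) • C :=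
  smul_inv_smul₀ h _

theorem smul_map_eq_of_smul_eq {W : Type*} [AddCommGroup W] [Module K W] (T : V →ᵃ[K] W)
    {A B C X : V} {a b c : K} (hX : (a + b + c) • X = a • A + b • B + c • C) :
    (a + b + c) • T X = a • T A + b • T B + c • T C := by
  have hT (Y : V) : T Y = T.linear Y + T 0 := congrFun T.decomp Y
  have hlin := congrArg T.linear hX
  rw [map_smul, map_add, map_add, map_smul, map_smul, map_smul] at hlin
  rw [hT X, hT A, hT B, hT C]
  linear_combination (norm := module) hlin

theorem map_isotomcomplement (T : V →ᵃ[K] V) {A B C : V} {x y z : K}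
    (h : 2 * (x * y + y * z + z * x) ≠ 0) (hA : (y + z) • T A = y • B + z • C)
    (hB : (x + z) • T B = x • A + z • C) (hC : (x + y) • T C = x • A + y • B) :
    T (isotomcomplement A B C x y z) = isotomcomplement A B C x y z := by
  have hweight : 2 * (x * y + y * z + z * x) = x * (y + z) + y * (x + z) + z * (x + y) := by ring
  have hQ := smul_isotomcomplement A B C h
  have hTQ := smul_map_eq_of_smul_eq T (hweight ▸ hQ)
  rw [← hweight] at hTQ
  apply smul_right_injective V h
  linear_combination (norm := module) hTQ - hQ + x • hA + y • hB + z • hC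

theorem smul_add_sub_isotomcomplement {A B C D : V} {x y z : K}
    (h : 2 * (x * y + y * z + z * x) ≠ 0) (hD : (y + z) • D = y • B + z • C) :
    (x * (y + z)) • (A + D - (2 : K) • isotomcomplement A B C x y z) =
      -(y * z) • (B + C - (2 : K) • isotomcomplement A B C x y z) := by
  linear_combination (norm := module) x • hD - smul_isotomcomplement A B C h

end Isotomcomplement

section Plane

variable {K : Type*} [Field K]

theorem wedge_eq_zero_of_collinear {A B C : K × K} (h : Collinear K {A, B, C}) :
    wedge (B - A) (C - A) = 0 := by
  obtain ⟨v, hv⟩ := (collinear_iff_of_mem (p₀ := A) (by simp)).mp h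
  obtain ⟨r, rfl⟩ := hv B (by simp)
  obtain ⟨s, rfl⟩ := hv C (by simp)
  simp [wedge_self]

theorem wedge_ne_zero_of_linearIndependent {u v : K × K} (h : LinearIndependent K ![u, v]) :
    wedge u v ≠ 0 := by
  intro h₀
  rw [wedge_apply] at h₀
  rw [LinearIndependent.pair_iff] at h
  have h₁ : v.1 = 0 ∧ -u.1 = 0 := h v.1 (-u.1) <| Prod.ext
    (show v.1 * u.1 + -u.1 * v.1 = 0 by ring)
    (show v.1 * u.2 + -u.1 * v.2 = 0 by linear_combination -h₀)
  have h₂ : v.2 = 0 ∧ -u.2 = 0 := h v.2 (-u.2) <| Prod.ext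
    (show v.2 * u.1 + -u.2 * v.1 = 0 by linear_combination h₀)
    (show v.2 * u.2 + -u.2 * v.2 = 0 by ring)
  have hu : u = 0 := Prod.ext (neg_eq_zero.mp h₁.2) (neg_eq_zero.mp h₂.2)
  exact one_ne_zero (h 1 0 (by simp [hu])).1

theorem wedge_ne_zero_of_affineIndependent {A B C : K × K}
    (h : AffineIndependent K ![A, B, C]) : wedge (B - A) (C - A) ≠ 0 := by
  have hlin := ((affineIndependent_iff_linearIndependent_vsub K _ 0).mp h).comp
    (fun i : Fin 2 ↦ ⟨i.succ, i.succ_ne_zero⟩) fun i j hij ↦ by simpa using hij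
  have hedges : ![B - A, C - A] = fun i : Fin 2 ↦ ![A, B, C] i.succ -ᵥ ![A, B, C] 0 := by
    ext1 i
    fin_cases i <;> rfl
  exact wedge_ne_zero_of_linearIndependent (hedges ▸ hlin)

theorem smul_cevian_foot {A B C P D : K × K} {x y z : K} (hABC : AffineIndependent K ![A, B, C])
    (hsum : x + y + z = 1) (hP : P = x • A + y • B + z • C) (hyz : y + z ≠ 0)
    (hAPD : Collinear K {A, P, D}) (hBCD : Collinear K {B, C, D}) :
    (y + z) • D = y • B + z • C := by
  obtain rfl : x = 1 - y - z := by linear_combination hsum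
  have hPA : P - A = y • (B - A) + z • (C - A) := by rw [hP]; module
  have hCB : C - B = (C - A) - (B - A) := by abel
  have hwedge : wedge (P - A) (C - B) ≠ 0 := by
    have : wedge (P - A) (C - B) = (y + z) * wedge (B - A) (C - A) := by
      rw [hPA, hCB]
      simp only [wedge_apply, Prod.fst_add, Prod.snd_add, Prod.fst_sub, Prod.snd_sub,
        Prod.smul_fst, Prod.smul_snd, smul_eq_mul]
      ring
    rw [this]
    exact mul_ne_zero hyz (wedge_ne_zero_of_affineIndependent hABC)
  have hfromA : (y + z) • D - (y • B + z • C) = (y + z) • (D - A) - (P - A) := by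
    rw [hPA]; module
  have hfromB : (y + z) • D - (y • B + z • C) = (y + z) • (D - B) - z • (C - B) := by module
  rw [← sub_eq_zero]
  apply eq_of_wedge_eq_wedge hwedge
  · rw [hfromA, LinearMap.map_sub₂, LinearMap.map_smul₂, wedge_self, ← neg_wedge (P - A),
      wedge_eq_zero_of_collinear hAPD, neg_zero, smul_zero, sub_zero, LinearMap.map_zero₂]
  · rw [hfromB, LinearMap.map_sub₂, LinearMap.map_smul₂, LinearMap.map_smul₂, wedge_self,
      ← neg_wedge (C - B), wedge_eq_zero_of_collinear hBCD, neg_zero, smul_zero, smul_zero,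
      sub_zero, LinearMap.map_zero₂]

theorem trace_linear_of_inscribed {A B C : K × K} (hABC : AffineIndependent K ![A, B, C])
    (T : K × K →ᵃ[K] K × K) (hA : Collinear K {B, C, T A}) (hB : Collinear K {A, C, T B})
    (hC : Collinear K {A, B, T C}) :
    LinearMap.trace K (K × K) T.linear = -1 := by
  have htrace := wedge_map_add_wedge_map T.linear (B - A) (C - A)
  rw [← vsub_eq_sub B A, ← vsub_eq_sub C A, T.linearMap_vsub, T.linearMap_vsub] at htrace
  apply mul_right_cancel₀ (wedge_ne_zero_of_affineIndependent hABC)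
  have hA' := wedge_eq_zero_of_collinear hA
  have hB' := wedge_eq_zero_of_collinear hB
  have hC' := wedge_eq_zero_of_collinear hC
  simp only [vsub_eq_sub, wedge_apply, Prod.fst_sub, Prod.snd_sub] at htrace hA' hB' hC' ⊢
  linear_combination -htrace + hA' - hB' + hC'

theorem wedge_sub_isotomcomplement_ne_zero {A B C : K × K} {x y z : K}
    (hABC : AffineIndependent K ![A, B, C]) (h : 2 * (x * y + y * z + z * x) ≠ 0) (hz : z ≠ 0)
    (hxy : x + y ≠ 0) :
    wedge (A - isotomcomplement A B C x y z) (B - isotomcomplement A B C x y z) ≠ 0 := by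
  set Q := isotomcomplement A B C x y z
  have hQ : (2 * (x * y + y * z + z * x)) • (Q - A) =
      (y * (x + z)) • (B - A) + (z * (x + y)) • (C - A) := by
    linear_combination (norm := module) smul_isotomcomplement A B C h
  have hwedge : 2 * (x * y + y * z + z * x) * wedge (A - Q) (B - Q) =
      z * (x + y) * wedge (B - A) (C - A) := calc
    _ = wedge (B - A) ((2 * (x * y + y * z + z * x)) • (Q - A)) := by
      simp only [map_smul, smul_eq_mul, wedge_apply, Prod.fst_sub, Prod.snd_sub]; ring
    _ = z * (x + y) * wedge (B - A) (C - A) := by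
      rw [hQ, map_add, map_smul, map_smul, wedge_self, smul_zero, zero_add, smul_eq_mul]
  apply right_ne_zero_of_mul
  rw [hwedge]
  exact mul_ne_zero (mul_ne_zero hz hxy) (wedge_ne_zero_of_affineIndependent hABC)

theorem wedge_cevian_midpoint_eq_zero {A B C D : K × K} {x y z : K}
    (h : 2 * (x * y + y * z + z * x) ≠ 0) (hx : x ≠ 0) (hyz : y + z ≠ 0)
    (hD : (y + z) • D = y • B + z • C) :
    wedge (A + D - (2 : K) • isotomcomplement A B C x y z)
      (B + C - (2 : K) • isotomcomplement A B C x y z) = 0 := by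
  apply (mul_eq_zero.mp ?_).resolve_left (mul_ne_zero hx hyz)
  rw [← smul_eq_mul, ← LinearMap.map_smul₂, smul_add_sub_isotomcomplement h hD, LinearMap.map_smul₂,
    wedge_self, smul_zero]

theorem wedge_map_sub_ne_zero (T : K × K ≃ᵃ[K] K × K) {A B Q : K × K} (hQ : T Q = Q)
    (hAB : wedge (A - Q) (B - Q) ≠ 0) : wedge (T A - Q) (T B - Q) ≠ 0 := by
  have hT (Y : K × K) : T Y - Q = T.linear.toLinearMap (Y - Q) := by
    conv_lhs => rw [← hQ]
    exact (T.toAffineMap.linearMap_vsub Y Q).symm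
  rw [hT, hT, wedge_map_map]
  exact mul_ne_zero T.linear.isUnit_det'.ne_zero hAB

theorem preimage_add_add_eq_of_trace_eq_neg_one (T : K × K →ᵃ[K] K × K) {A B C Q X H : K × K}
    (htrace : LinearMap.trace K (K × K) T.linear = -1) (hQ : T Q = Q)
    (hAB : wedge (T A - Q) (T B - Q) ≠ 0)
    (hA : wedge (A + T A - (2 : K) • Q) (B + C - (2 : K) • Q) = 0)
    (hB : wedge (B + T B - (2 : K) • Q) (A + C - (2 : K) • Q) = 0)
    (hTX : T X = H) (hHA : wedge (H - A) (T A - Q) = 0) (hHB : wedge (H - B) (T B - Q) = 0) :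
    X + H + Q = A + B + C := by
  subst hTX
  have hT (Y : K × K) : T Y = T.linear (Y - Q) + Q := by
    rw [← vsub_eq_sub, T.linearMap_vsub, hQ, vsub_eq_sub, sub_add_cancel]
  have hsum (Y : K × K) : Y + T Y - (2 : K) • Q = (Y - Q) + T.linear (Y - Q) := by
    rw [hT]; module
  have hsub (Y : K × K) : T X - Y = T.linear (X - Q) - (Y - Q) := by
    rw [hT]; abel
  rw [hsum] at hA hB
  rw [hsub, hT, add_sub_cancel_right] at hHA hHB
  have hAB' : wedge ((A - Q) + T.linear (A - Q)) ((B - Q) + T.linear (B - Q)) ≠ 0 := by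
    rwa [wedge_add_map_add_map_of_trace_eq_neg_one htrace, ← sub_eq_of_eq_add (hT A),
      ← sub_eq_of_eq_add (hT B)]
  have hX : (X - Q) + T.linear (X - Q) = A + B + C - (3 : K) • Q := by
    apply eq_of_wedge_eq_wedge hAB'
    · rw [wedge_add_map_eq_of_trace_eq_neg_one htrace hA hHA]
      congr 2
      module
    · rw [wedge_add_map_eq_of_trace_eq_neg_one htrace hB hHB]
      congr 2
      module
  linear_combination (norm := module) hsum X + hX

theorem preimage_add_add_isotomcomplement_eq (T : K × K →ᵃ[K] K × K) {A B C X H : K × K} {x y z : K}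
    (h : 2 * (x * y + y * z + z * x) ≠ 0) (hx : x ≠ 0) (hy : y ≠ 0) (hyz : y + z ≠ 0)
    (hxz : x + z ≠ 0) (hTA : (y + z) • T A = y • B + z • C) (hTB : (x + z) • T B = x • A + z • C)
    (htrace : LinearMap.trace K (K × K) T.linear = -1)
    (hfix : T (isotomcomplement A B C x y z) = isotomcomplement A B C x y z)
    (hAB : wedge (T A - isotomcomplement A B C x y z) (T B - isotomcomplement A B C x y z) ≠ 0)
    (hTX : T X = H) (hHA : wedge (H - A) (T A - isotomcomplement A B C x y z) = 0)
    (hHB : wedge (H - B) (T B - isotomcomplement A B C x y z) = 0) :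
    X + H + isotomcomplement A B C x y z = A + B + C := by
  have hA := wedge_cevian_midpoint_eq_zero (A := A) h hx hyz hTA
  have h' : 2 * (y * x + x * z + z * y) ≠ 0 := by convert h using 2; ring
  have hB := wedge_cevian_midpoint_eq_zero (A := B) h' hy hxz hTB
  rw [isotomcomplement_swap] at hB
  exact preimage_add_add_eq_of_trace_eq_neg_one T htrace hfix hAB hA hB hTX hHA hHB

theorem add_two_smul_eq_of_parallel {A B C O H u v : K × K} (huv : wedge u v ≠ 0)
    (hHA : wedge (H - A) u = 0) (hHB : wedge (H - B) v = 0)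
    (hOA : wedge (B + C - (2 : K) • O) u = 0) (hOB : wedge (C + A - (2 : K) • O) v = 0) :
    H + (2 : K) • O = A + B + C := by
  have hA : H + (2 : K) • O - (A + B + C) = (H - A) - (B + C - (2 : K) • O) := by abel
  have hB : H + (2 : K) • O - (A + B + C) = (H - B) - (C + A - (2 : K) • O) := by abel
  rw [← sub_eq_zero]
  apply eq_of_wedge_eq_wedge huv
  · rw [hA, LinearMap.map_sub₂, hHA, hOA, sub_zero, LinearMap.map_zero₂]
  · rw [hB, LinearMap.map_sub₂, hHB, hOB, sub_zero, LinearMap.map_zero₂]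

end Plane

theorem Par.wedge_eq_zero {u v : Pt} (h : Par u v) : wedge u v = 0 := by
  obtain ⟨t, rfl | rfl⟩ := h <;> simp [wedge_self]

theorem Par.wedge_add_sub_eq_zero {X Y O v : Pt} (h : Par (midpoint ℝ X Y - O) v) :
    wedge (X + Y - (2 : ℝ) • O) v = 0 := by
  have htwice : X + Y - (2 : ℝ) • O = (2 : ℝ) • (midpoint ℝ X Y - O) := by
    rw [midpoint_eq_smul_add, invOf_eq_inv]; module
  rw [htwice, LinearMap.map_smul₂, h.wedge_eq_zero, smul_zero]

theorem homoth_cent_isotomicConjugate {A B C : Pt} {x y z : ℝ}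
    (h : x * y + y * z + z * x ≠ 0) :
    homoth (cent A B C) (-(1 / 2)) ((y * z / (x * y + y * z + z * x)) • A +
      (x * z / (x * y + y * z + z * x)) • B + (x * y / (x * y + y * z + z * x)) • C) =
      isotomcomplement A B C x y z := by
  rw [homoth, cent, isotomcomplement]
  generalize hσ : x * y + y * z + z * x = σ at h ⊢
  match_scalars <;> field_simp <;> linear_combination -3 * hσ

theorem eq_midpoint_homoth_cent_of_add_eq {A B C P' H X : Pt}
    (h : X + H + homoth (cent A B C) (-(1 / 2)) P' = A + B + C) :
    X = midpoint ℝ P' (homoth (cent A B C) (-2) H) := by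
  rw [homoth, cent] at h
  rw [homoth, cent, midpoint_eq_smul_add, invOf_eq_inv]
  linear_combination (norm := module) h

theorem Htilde_midpoint_lemma
    (A B C P P' Q Q' D E F D₃ E₃ F₃ : Pt) (x y z : ℝ)
    (hABC : AffineIndependent ℝ ![A, B, C])
    (hsum : x + y + z = 1)
    (hPco : P = x • A + y • B + z • C)
    (hx0 : x ≠ 0) (hy0 : y ≠ 0) (hz0 : z ≠ 0)
    (hx1 : x ≠ 1) (hy1 : y ≠ 1) (hz1 : z ≠ 1)
    (hst : x * y + y * z + z * x ≠ 0)
    (hP' : P' = (y * z / (x * y + y * z + z * x)) • A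
        + (x * z / (x * y + y * z + z * x)) • B
        + (x * y / (x * y + y * z + z * x)) • C)
    (hQ : Q = homoth (cent A B C) (-(1 / 2)) P')
    (hQ' : Q' = homoth (cent A B C) (-(1 / 2)) P)
    (hD : Collinear ℝ {A, P, D} ∧ Collinear ℝ {B, C, D})
    (hE : Collinear ℝ {B, P, E} ∧ Collinear ℝ {A, C, E})
    (hF : Collinear ℝ {C, P, F} ∧ Collinear ℝ {A, B, F})
    (hD₃ : Collinear ℝ {A, P', D₃} ∧ Collinear ℝ {B, C, D₃})
    (hE₃ : Collinear ℝ {B, P', E₃} ∧ Collinear ℝ {A, C, E₃})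
    (hF₃ : Collinear ℝ {C, P', F₃} ∧ Collinear ℝ {A, B, F₃})
    (TP : Pt ≃ᵃ[ℝ] Pt) (hTP : TP A = D ∧ TP B = E ∧ TP C = F)
    (O H : Pt)
    (hO : Par (midpoint ℝ B C - O) (D - Q) ∧ Par (midpoint ℝ C A - O) (E - Q) ∧
          Par (midpoint ℝ A B - O) (F - Q))
    (hH : Par (H - A) (D - Q) ∧ Par (H - B) (E - Q) ∧ Par (H - C) (F - Q)) :
    TP.symm H = midpoint ℝ P' (homoth (cent A B C) (-2) H) ∧
    O = midpoint ℝ Q (TP.symm H) := by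
  obtain ⟨rfl, rfl, rfl⟩ := hTP
  have hyz : y + z ≠ 0 := fun h ↦ hx1 (by linear_combination hsum - h)
  have hxz : x + z ≠ 0 := fun h ↦ hy1 (by linear_combination hsum - h)
  have hxy : x + y ≠ 0 := fun h ↦ hz1 (by linear_combination hsum - h)
  have hσ : 2 * (x * y + y * z + z * x) ≠ 0 := mul_ne_zero two_ne_zero hst
  have hTA : (y + z) • TP A = y • B + z • C := smul_cevian_foot hABC hsum hPco hyz hD.1 hD.2
  have hTB : (x + z) • TP B = x • A + z • C := smul_cevian_foot (x := y) hABC.comm_left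
    (by rwa [add_comm y]) (by rwa [add_comm (y • B)]) hxz hE.1 hE.2
  have hTC : (x + y) • TP C = x • A + y • B := smul_cevian_foot (x := z) hABC.comm_right.comm_left
    (by linear_combination hsum) (by rw [hPco]; abel) hxy hF.1 hF.2
  obtain rfl : Q = isotomcomplement A B C x y z := by
    rw [hQ, hP', homoth_cent_isotomicConjugate hst]
  have hfix := map_isotomcomplement TP.toAffineMap hσ hTA hTB hTC
  have hDE := wedge_map_sub_ne_zero TP hfix (wedge_sub_isotomcomplement_ne_zero hABC hσ hz0 hxy)
  have hOH : H + (2 : ℝ) • O = A + B + C := add_two_smul_eq_of_parallel hDE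
    hH.1.wedge_eq_zero hH.2.1.wedge_eq_zero hO.1.wedge_add_sub_eq_zero hO.2.1.wedge_add_sub_eq_zero
  have hX : TP.symm H + H + isotomcomplement A B C x y z = A + B + C :=
    preimage_add_add_isotomcomplement_eq TP.toAffineMap hσ hx0 hy0 hyz hxz hTA hTB
      (trace_linear_of_inscribed hABC TP.toAffineMap hD.2 hE.2 hF.2) hfix hDE
      (TP.apply_symm_apply H) hH.1.wedge_eq_zero hH.2.1.wedge_eq_zero
  refine ⟨eq_midpoint_homoth_cent_of_add_eq (hQ ▸ hX), ?_⟩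
  rw [midpoint_eq_smul_add, invOf_eq_inv]
  linear_combination (norm := module) (1 / 2 : ℝ) • (hOH - hX)
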